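/- arXiv:1804.09638 — 9 statements merged into one kernel-verified Lean document; each statement's English description precedes it below -/
import Mathlib

section
/- Let k ≥ 1 and let (e_i)_{i∈ℕ} be a sequence of finite nonempty subsets of ℕ, viewed as the edges of a hypergraph with vertex set ℕ. If for every n there exists a coloring c : ℕ → Fin k such that each of the edges e_0, …, e_{n−1} contains exactly one vertex of some color (i.e., for each edge e among them there is j with exactly one v ∈ e satisfying c(v) = j), then there exists a coloring c : ℕ → Fin k with this property for every edge e_i simultaneously. -/
/-!
Take the limit of the colorings `c n` of the finite partial hypergraphs along a nonprincipal
ultrafilter on `ℕ`: each vertex takes values in the finite set `Fin k`, so its color is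
constant on an ultrafilter-large set of `n`. Being conflict-free on a finite edge depends on
finitely many vertex colors, and the ultrafilter refines `atTop`, so every edge `e i` inherits
its uniquely colored vertex from some `c n` with `n > i`.
-/

/-- Compactness for conflict-free k-colorings of hypergraphs on ℕ given by a
sequence of finite nonempty edges. -/
theorem conflictFree_coloring_compactness (k : ℕ) (hk : 1 ≤ k) (e : ℕ → Finset ℕ)
    (hne : ∀ i, (e i).Nonempty)
    (h : ∀ n : ℕ, ∃ c : ℕ → Fin k, ∀ i < n, ∃ j : Fin k,
      ((e i).filter (fun v => c v = j)).card = 1) :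
    ∃ c : ℕ → Fin k, ∀ i : ℕ, ∃ j : Fin k,
      ((e i).filter (fun v => c v = j)).card = 1 := by
  choose c hc using h
  -- The limit coloring: `Fin k` is finite, so along a nonprincipal ultrafilter the color
  -- `c n v` of each vertex `v` is eventually constant.
  have hlim : ∀ v, ∃ a : Fin k, ∀ᶠ n in (Filter.hyperfilter ℕ : Filter ℕ), c n v = a := by
    intro v
    obtain ⟨a, ha⟩ := ((Filter.hyperfilter ℕ).map (fun n => c n v)).eq_pure_of_finite
    refine ⟨a, ?_⟩
    have hmem : {a} ∈ (Filter.hyperfilter ℕ).map (fun n => c n v) := by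
      rw [ha]; exact Ultrafilter.mem_pure.2 rfl
    exact hmem
  choose d hd using hlim
  refine ⟨d, fun i => ?_⟩
  -- As `e i` is finite, some `c n` with `n > i` agrees with the limit on all of `e i`.
  have hagree : ∀ᶠ n in (Filter.hyperfilter ℕ : Filter ℕ), ∀ v ∈ e i, c n v = d v :=
    (Filter.eventually_all_finset (e i)).2 fun v _ => hd v
  have hgt : ∀ᶠ n in (Filter.hyperfilter ℕ : Filter ℕ), i < n :=
    Nat.hyperfilter_le_atTop (Filter.eventually_gt_atTop i)
  obtain ⟨n, hn, hin⟩ := (hagree.and hgt).exists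
  obtain ⟨j, hj⟩ := hc n i hin
  refine ⟨j, ?_⟩
  rw [← hj]
  exact congrArg Finset.card (Finset.filter_congr fun v hv => by rw [hn v hv])
end

section
/- Let k ≥ 1 and let (e_i)_{i∈ℕ} be a sequence of finite subsets of ℕ, viewed as the edges of a hypergraph with vertex set ℕ. If for every n there exists a coloring c : ℕ → Fin k that is injective on each of the edges e_0, …, e_{n−1}, then there exists a coloring c : ℕ → Fin k that is injective on every edge e_i. -/
/-- Compactness for strong k-colorings of hypergraphs on ℕ given by a
sequence of finite edges. -/
theorem strong_coloring_compactness (k : ℕ) (hk : 1 ≤ k) (e : ℕ → Finset ℕ)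
    (h : ∀ n : ℕ, ∃ c : ℕ → Fin k, ∀ i < n, Set.InjOn c (e i)) :
    ∃ c : ℕ → Fin k, ∀ i : ℕ, Set.InjOn c (e i) := by
  choose c hc using h
  -- An ultrafilter on the finite set `Fin k` is principal, so along a nonprincipal ultrafilter
  -- on ℕ the colors `c n v` are eventually constant in `n`; this constant is the color of `v`.
  have hlim : ∀ v, ∃ a, ∀ᶠ n in (Filter.hyperfilter ℕ : Filter ℕ), c n v = a := by
    intro v
    obtain ⟨a, ha⟩ := ((Filter.hyperfilter ℕ).map fun n => c n v).eq_pure_of_finite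
    refine ⟨a, ?_⟩
    have hmem : ({a} : Set (Fin k)) ∈ (Filter.hyperfilter ℕ).map fun n => c n v := by
      rw [ha]
      exact Ultrafilter.mem_pure.2 rfl
    exact hmem
  choose d hd using hlim
  refine ⟨d, fun i x hx y hy hxy => ?_⟩
  -- Some `n > i` has `c n` agreeing with `d` at both `x` and `y`.
  have hgt : ∀ᶠ n in (Filter.hyperfilter ℕ : Filter ℕ), i < n :=
    Nat.hyperfilter_le_atTop (Filter.eventually_gt_atTop i)
  obtain ⟨n, hn, hnx, hny⟩ := (hgt.and ((hd x).and (hd y))).exists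
  exact hc n i hn hx hy (by rw [hnx, hny, hxy])
end

section
/- No finite coloring of the M-graph is conflict-free: for every k ≥ 1 and every f : ℕ → Fin k there exists j ∈ ℕ such that for every color c, the number of x with j ≤ x and f(x) = c is not equal to 1 (i.e., no color appears exactly once on the edge E_j = {x : j ≤ x}). -/
/-- A color can be the unique witness only for boundedly many edges: once `x` is its only
occurrence on some edge, the color is absent from every edge starting after `x`. -/
lemma eventually_not_existsUnique {α : Type*} (f : ℕ → α) (c : α) :
    ∃ b : ℕ, ∀ j, b ≤ j → ¬ (∃! x : ℕ, j ≤ x ∧ f x = c) := by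
  by_cases h : ∃ i : ℕ, ∃! x : ℕ, i ≤ x ∧ f x = c
  · obtain ⟨i, x, ⟨hix, -⟩, hu⟩ := h
    refine ⟨x + 1, fun j hj ⟨y, ⟨hjy, hy⟩, _⟩ => ?_⟩
    have := hu y ⟨by omega, hy⟩
    omega
  · exact ⟨0, fun j _ hj => h ⟨j, hj⟩⟩

/-- No finite coloring of the M-graph (edges `E_j = {x : j ≤ x}`) is
conflict-free: some edge `E_j` has no color appearing exactly once on it. -/
theorem M_graph_no_conflictFree_coloring (k : ℕ) (hk : 1 ≤ k) (f : ℕ → Fin k) :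
    ∃ j : ℕ, ∀ c : Fin k, ¬ (∃! x : ℕ, j ≤ x ∧ f x = c) := by
  choose b hb using eventually_not_existsUnique f
  -- With finitely many colors, one edge lies beyond all the bounds.
  exact ⟨Finset.univ.sup b, fun c => hb c _ (Finset.le_sup (Finset.mem_univ c))⟩
end

section
/- Let k ≥ 1 and f : ℕ → Fin k. For any strictly increasing sequence x_0 < x_1 < … < x_N of natural numbers with N = 3·2^(k−1), there exist indices i < j ≤ N such that no value of f appears exactly once in the interval [x_i, x_j) = {x : x_i ≤ x < x_j}, i.e., for every color c the number of x with x_i ≤ x < x_j and f(x) = c is not equal to 1. -/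
/-! Suppose every `[x i, x j)` has a color appearing exactly once. Take such a color `c` for
`[x a, x b)`, and let `[x m, x (m + 1))` be the block holding its only occurrence. Then `c` is absent
from `[x a, x m)` and from `[x (m + 1), x b)`, so an interval using at most `s` colors consists of
two intervals using at most `s - 1` colors and one further block. By induction it has at most
`2 ^ s - 1` blocks (`length_lt_two_pow`), and `2 ^ k - 1 < 3 * 2 ^ (k - 1)`. -/

/-- Holds for any sequence `x`, monotone or not. -/
lemma exists_block (x : ℕ → ℕ) {a b z : ℕ} (hab : a ≤ b) (ha : x a ≤ z) (hb : z < x b) :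
    ∃ m, a ≤ m ∧ m < b ∧ x m ≤ z ∧ z < x (m + 1) := by
  induction b, hab using Nat.le_induction with
  | base => omega
  | succ n hn ih =>
    by_cases h : z < x n
    · obtain ⟨m, h1, h2, h3, h4⟩ := ih h
      exact ⟨m, h1, by omega, h3, h4⟩
    · exact ⟨n, hn, by omega, by omega, hb⟩

/-- If every interval with endpoints among `x a, …, x b` has a color appearing exactly once, and
only `s` colors are available on `[x a, x b)`, then there are fewer than `2 ^ s` blocks. -/
lemma length_lt_two_pow {k : ℕ} (f : ℕ → Fin k) (x : ℕ → ℕ) (s : ℕ) :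
    ∀ (S : Finset (Fin k)) (a b : ℕ), S.card = s → a ≤ b →
      (∀ z, x a ≤ z → z < x b → f z ∈ S) →
      (∀ i j, a ≤ i → i < j → j ≤ b →
        ∃ c, ((Finset.Ico (x i) (x j)).filter (fun z => f z = c)).card = 1) →
      b - a < 2 ^ s := by
  induction s with
  | zero =>
    intro S a b hS hab hf hg
    rcases hab.eq_or_lt with rfl | hlt
    · simp
    · obtain ⟨c, hc⟩ := hg a b le_rfl hlt le_rfl
      obtain ⟨z, hz⟩ := Finset.card_pos.mp (hc ▸ Nat.one_pos)
      simp only [Finset.mem_filter, Finset.mem_Ico] at hz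
      have := hf z hz.1.1 hz.1.2
      simp [Finset.card_eq_zero.mp hS] at this
  | succ s ih =>
    intro S a b hS hab hf hg
    rcases hab.eq_or_lt with rfl | hlt
    · simp
    obtain ⟨c, hc⟩ := hg a b le_rfl hlt le_rfl
    obtain ⟨z, hz⟩ := Finset.card_eq_one.mp hc
    have hiff : ∀ w, (x a ≤ w ∧ w < x b) ∧ f w = c ↔ w = z := fun w => by
      simpa using Finset.ext_iff.mp hz w
    obtain ⟨⟨hza, hzb⟩, hfz⟩ := (hiff z).mpr rfl
    obtain ⟨m, ham, hmb, hxm, hxm'⟩ := exists_block x hab hza hzb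
    have hcard : (S.erase c).card = s := by
      rw [Finset.card_erase_of_mem (hfz ▸ hf z hza hzb), hS]; rfl
    have hl : m - a < 2 ^ s := by
      refine ih (S.erase c) a m hcard ham (fun w h1 h2 => ?_)
        (fun i j h1 h2 h3 => hg i j h1 h2 (by omega))
      refine Finset.mem_erase.mpr ⟨fun h => ?_, hf w h1 (by omega)⟩
      have := (hiff w).mp ⟨⟨h1, by omega⟩, h⟩
      omega
    have hr : b - (m + 1) < 2 ^ s := by
      refine ih (S.erase c) (m + 1) b hcard hmb (fun w h1 h2 => ?_)
        (fun i j h1 h2 h3 => hg i j (by omega) h2 h3)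
      refine Finset.mem_erase.mpr ⟨fun h => ?_, hf w (by omega) h2⟩
      have := (hiff w).mp ⟨⟨by omega, h2⟩, h⟩
      omega
    rw [pow_succ]
    omega

/-- Given `f : ℕ → Fin k` and a strictly increasing sequence
`x 0 < x 1 < … < x N` with `N = 3 * 2 ^ (k - 1)`, there are indices
`i < j ≤ N` such that no value of `f` appears exactly once in `[x i, x j)`. -/
theorem no_homogeneous_one (k : ℕ) (hk : 1 ≤ k) (f : ℕ → Fin k) (x : ℕ → ℕ)
    (hx : ∀ i < 3 * 2 ^ (k - 1), x i < x (i + 1)) :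
    ∃ i j : ℕ, i < j ∧ j ≤ 3 * 2 ^ (k - 1) ∧
      ∀ c : Fin k, ((Finset.Ico (x i) (x j)).filter (fun z => f z = c)).card ≠ 1 := by
  by_contra! hcon
  have h := length_lt_two_pow f x k Finset.univ 0 (3 * 2 ^ (k - 1)) (by simp) (Nat.zero_le _)
    (fun _ _ _ => Finset.mem_univ _) (fun i j _ h2 h3 => hcon i j h2 h3)
  obtain ⟨n, rfl⟩ := Nat.exists_eq_add_of_le' hk
  rw [Nat.add_sub_cancel, pow_succ] at h
  omega
end

section
/- Let T be a tree of finite sequences of natural numbers (a set of finite sequences closed under initial segments). If the hypergraph H_T admits a proper 2-coloring (a coloring of its vertices with 2 colors that is non-constant on every edge with at least two vertices), then T has an infinite path, i.e., there is p : ℕ → ℕ all of whose finite initial segments belong to T. -/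
/-!
Let `c` be the color of `s`. With two colors, the edges `{a₀, a₁}`, `{a₁, s}` and
`{b₀, b₁}`, `{b₁, s}` force `a₀` and `b₀` to have color `c`. As `E₀` is not constant, some
`σ` of length one has `σ₀` of a color other than `c`. Whenever `σ₀` has a color other than `c`,
the edge `{σ₀, σ₁}` gives `σ₁` color `c`; so `{σ₁, s}` is not an edge, i.e. `σ` is not a leaf, and
since `E_σ` is not constant, some child `τ` of `σ` has `τ₀` of a color other than `c`. Hence
the nodes `σ ∈ T` which are empty or have `σ₀` of a color other than `c` contain the root and
have no leaves (`exists_good_child`), and iterating the choice of a child gives the path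
(`exists_branch_of_no_leaf`).
-/

/-- The vertices of the hypergraph `H_T`: five special vertices
`a₀, a₁, b₀, b₁, s`, and two vertices `σ₀ = node σ false`, `σ₁ = node σ true`
for each (nonempty) finite sequence `σ`. -/
inductive HTVertex where
  | a0 : HTVertex
  | a1 : HTVertex
  | b0 : HTVertex
  | b1 : HTVertex
  | s : HTVertex
  | node : List ℕ → Bool → HTVertex

open HTVertex

/-- The edges of the hypergraph `H_T` associated to a tree `T` of finite
sequences of natural numbers. -/
def HTEdges (T : Set (List ℕ)) : Set (Set HTVertex) :=
  {({a0, a1} : Set HTVertex), ({a1, s} : Set HTVertex),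
    ({b0, b1} : Set HTVertex), ({b1, s} : Set HTVertex)} ∪
  {e | ∃ σ ∈ T, σ ≠ [] ∧ e = ({node σ false, node σ true} : Set HTVertex)} ∪
  {e | ∃ σ ∈ T, σ ≠ [] ∧ (∀ n : ℕ, σ ++ [n] ∉ T) ∧
    e = ({node σ true, s} : Set HTVertex)} ∪
  {e | ∃ σ ∈ T, σ ≠ [] ∧ (∃ n : ℕ, σ ++ [n] ∈ T) ∧
    e = insert (node σ true) {w | ∃ n : ℕ, σ ++ [n] ∈ T ∧ w = node (σ ++ [n]) false}} ∪
  {({a0, b0} : Set HTVertex) ∪ {w | ∃ σ ∈ T, σ.length = 1 ∧ w = node σ false}}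

/-- Dependent choice along a family of finite sequences: if it contains the empty sequence and each
member has a one-step extension in it, it has an infinite branch. -/
theorem exists_branch_of_no_leaf (P : List ℕ → Prop) (h0 : P [])
    (hstep : ∀ σ, P σ → ∃ n : ℕ, P (σ ++ [n])) :
    ∃ p : ℕ → ℕ, ∀ n : ℕ, P (List.ofFn fun i : Fin n => p i) := by
  choose k hk using hstep
  let f : ℕ → {σ // P σ} := fun n =>
    Nat.rec ⟨[], h0⟩ (fun _ σ => ⟨σ.1 ++ [k σ.1 σ.2], hk σ.1 σ.2⟩) n
  refine ⟨fun n => k (f n).1 (f n).2, fun n => ?_⟩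
  have key : ∀ n, (List.ofFn fun i : Fin n => k (f i).1 (f i).2) = (f n).1 := by
    intro n
    induction n with
    | zero => simp [f]
    | succ n ih =>
      rw [List.ofFn_succ_last]
      simp only [Fin.val_castSucc, Fin.val_last]
      rw [ih]
  rw [key n]
  exact (f n).2

/-- A pair edge of a properly colored hypergraph has differently colored ends. -/
theorem pair_ne {V : Type*} {E : Set (Set V)} {χ : V → Fin 2}
    (hχ : ∀ e ∈ E, (∃ v ∈ e, ∃ w ∈ e, v ≠ w) → ∃ v ∈ e, ∃ w ∈ e, χ v ≠ χ w)
    {x y : V} (hxy : x ≠ y) (he : ({x, y} : Set V) ∈ E) : χ x ≠ χ y := by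
  intro h
  obtain ⟨v, hv, w, hw, hne⟩ := hχ _ he ⟨x, by simp, y, by simp, hxy⟩
  rcases hv with rfl | rfl <;> rcases hw with rfl | rfl <;> simp_all

/-- A nonconstant edge has a vertex whose color differs from any prescribed one. -/
theorem exists_color_ne {V : Type*} {E : Set (Set V)} {χ : V → Fin 2}
    (hχ : ∀ e ∈ E, (∃ v ∈ e, ∃ w ∈ e, v ≠ w) → ∃ v ∈ e, ∃ w ∈ e, χ v ≠ χ w)
    {e : Set V} (he : e ∈ E) {x y : V} (hx : x ∈ e) (hy : y ∈ e) (hxy : x ≠ y) (c : Fin 2) :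
    ∃ v ∈ e, χ v ≠ c := by
  obtain ⟨v, hv, w, hw, hne⟩ := hχ _ he ⟨x, hx, y, hy, hxy⟩
  by_cases h : χ v = c
  · exact ⟨w, hw, fun h' => hne (h.trans h'.symm)⟩
  · exact ⟨v, hv, h⟩

/-- With two colors, being different twice means being equal. -/
theorem eq_of_ne_of_ne {x y z : Fin 2} (h₁ : x ≠ y) (h₂ : y ≠ z) : x = z := by
  omega

theorem exists_good_child (T : Set (List ℕ)) (χ : HTVertex → Fin 2)
    (hχ : ∀ e ∈ HTEdges T, (∃ v ∈ e, ∃ w ∈ e, v ≠ w) → ∃ v ∈ e, ∃ w ∈ e, χ v ≠ χ w)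
    (σ : List ℕ) (hσ : σ = [] ∨ σ ∈ T ∧ χ (node σ false) ≠ χ s) :
    ∃ n : ℕ, σ ++ [n] ∈ T ∧ χ (node (σ ++ [n]) false) ≠ χ s := by
  by_cases hnil : σ = []
  · subst hnil
    have ha : χ a0 = χ s := eq_of_ne_of_ne
      (pair_ne hχ (x := a0) (y := a1) (by simp) (by simp [HTEdges]))
      (pair_ne hχ (x := a1) (y := s) (by simp) (by simp [HTEdges]))
    have hb : χ b0 = χ s := eq_of_ne_of_ne
      (pair_ne hχ (x := b0) (y := b1) (by simp) (by simp [HTEdges]))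
      (pair_ne hχ (x := b1) (y := s) (by simp) (by simp [HTEdges]))
    obtain ⟨v, hv, hvs⟩ := exists_color_ne hχ
      (e := {a0, b0} ∪ {w | ∃ σ ∈ T, σ.length = 1 ∧ w = node σ false})
      (Or.inr rfl) (x := a0) (y := b0) (by simp) (by simp) (by simp) (χ s)
    rcases hv with (rfl | rfl) | ⟨τ, hτ, hlen, rfl⟩
    · exact absurd ha hvs
    · exact absurd hb hvs
    · obtain ⟨n, rfl⟩ := List.length_eq_one_iff.mp hlen
      exact ⟨n, hτ, hvs⟩
  · obtain ⟨hT, hne⟩ := hσ.resolve_left hnil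
    have h1 : χ (node σ true) = χ s := eq_of_ne_of_ne
      (pair_ne hχ (x := node σ false) (y := node σ true) (by simp)
        (Or.inl (Or.inl (Or.inl (Or.inr ⟨σ, hT, hnil, rfl⟩))))).symm hne
    have hchild : ∃ n : ℕ, σ ++ [n] ∈ T := by
      by_contra! hleaf
      exact pair_ne hχ (x := node σ true) (y := s) (by simp)
        (Or.inl (Or.inl (Or.inr ⟨σ, hT, hnil, hleaf, rfl⟩))) h1
    obtain ⟨m, hm⟩ := hchild
    obtain ⟨v, hv, hvs⟩ := exists_color_ne hχ
      (e := insert (node σ true) {w | ∃ n : ℕ, σ ++ [n] ∈ T ∧ w = node (σ ++ [n]) false})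
      (Or.inl (Or.inr ⟨σ, hT, hnil, ⟨m, hm⟩, rfl⟩))
      (x := node σ true) (y := node (σ ++ [m]) false)
      (Or.inl rfl) (Or.inr ⟨m, hm, rfl⟩) (by simp) (χ s)
    rcases hv with rfl | ⟨n, hn, rfl⟩
    · exact absurd h1 hvs
    · exact ⟨n, hn, hvs⟩

/-- If the hypergraph `H_T` associated to a tree `T` admits a proper 2-coloring,
then `T` has an infinite path. -/
theorem proper_coloring_gives_path (T : Set (List ℕ))
    (hT : ∀ σ ∈ T, ∀ τ : List ℕ, τ <+: σ → τ ∈ T)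
    (χ : HTVertex → Fin 2)
    (hχ : ∀ e ∈ HTEdges T, (∃ v ∈ e, ∃ w ∈ e, v ≠ w) → ∃ v ∈ e, ∃ w ∈ e, χ v ≠ χ w) :
    ∃ p : ℕ → ℕ, ∀ n : ℕ, (List.ofFn fun i : Fin n => p i) ∈ T := by
  obtain ⟨p, hp⟩ := exists_branch_of_no_leaf
    (fun σ => σ = [] ∨ σ ∈ T ∧ χ (node σ false) ≠ χ s) (Or.inl rfl)
    (fun σ hσ => (exists_good_child T χ hχ σ hσ).imp fun _ h => Or.inr h)
  refine ⟨p, fun n => ?_⟩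
  -- The root lies in `T` as an initial segment of the segment of length one.
  rcases hp n with h | h
  · rw [h]
    exact hT _ ((hp 1).resolve_left (by simp)).1 _ List.nil_prefix
  · exact h.1
end

section
/- Let T be a tree of finite sequences of natural numbers (a set of finite sequences closed under initial segments). If T has an infinite path p : ℕ → ℕ (all finite initial segments of p belong to T), then the hypergraph H_T admits a 2-coloring of its vertices that is both proper (non-constant on every edge with at least two vertices) and conflict-free (every edge contains a vertex whose color matches no other vertex of that edge). -/
open HTVertex

/-- `σ` is an initial segment of the infinite path `p`. -/
def OnPath (p : ℕ → ℕ) (σ : List ℕ) : Prop := σ = (List.range σ.length).map p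

theorem onPath_append_singleton (p : ℕ → ℕ) (σ : List ℕ) (n : ℕ) :
    OnPath p (σ ++ [n]) ↔ OnPath p σ ∧ n = p σ.length := by
  simp [OnPath, List.range_succ]

open Classical in
/-- The colouring of `H_T` given by the path `p`: the colour `1` at `σ₀` marks that `σ` is on the
path, and `σ₁` has the opposite colour. -/
noncomputable def pathColoring (p : ℕ → ℕ) : HTVertex → Fin 2
  | a0 => 0
  | a1 => 1
  | b0 => 0
  | b1 => 1
  | s => 0
  | node σ false => if OnPath p σ then 1 else 0
  | node σ true => if OnPath p σ then 0 else 1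

theorem pair_conflictFree {χ : HTVertex → Fin 2} {x y : HTVertex} (h : χ y ≠ χ x) :
    ∃ v ∈ ({x, y} : Set HTVertex), ∀ w ∈ ({x, y} : Set HTVertex), w ≠ v → χ w ≠ χ v := by
  refine ⟨x, by simp, ?_⟩
  rintro w (rfl | rfl) hw
  · exact absurd rfl hw
  · exact h

theorem pathColoring_conflictFree (T : Set (List ℕ)) (p : ℕ → ℕ)
    (hp : ∀ n : ℕ, (List.range n).map p ∈ T) :
    ∀ e ∈ HTEdges T, ∃ v ∈ e, ∀ w ∈ e, w ≠ v → pathColoring p w ≠ pathColoring p v := by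
  -- a vertex on the path has its path successor as a child in `T`
  have hsucc : ∀ σ, OnPath p σ → σ ++ [p σ.length] ∈ T := by
    intro σ hσ
    have h := hp (σ.length + 1)
    rw [List.range_succ, List.map_append, ← (show σ = _ from hσ)] at h
    exact h
  rintro e ((((h | ⟨σ, -, -, rfl⟩) | ⟨σ, -, -, hl, rfl⟩) | ⟨σ, -, -, -, rfl⟩) | rfl)
  · rcases h with rfl | rfl | rfl | rfl <;> apply pair_conflictFree <;> simp [pathColoring]
  · apply pair_conflictFree
    by_cases h : OnPath p σ <;> simp [pathColoring, h]
  · apply pair_conflictFree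
    have h : ¬ OnPath p σ := fun h => hl _ (hsucc σ h)
    simp [pathColoring, h]
  · by_cases h : OnPath p σ
    · refine ⟨node (σ ++ [p σ.length]) false, Or.inr ⟨_, hsucc σ h, rfl⟩, ?_⟩
      rintro w (rfl | ⟨n, -, rfl⟩) hw
      · simp [pathColoring, onPath_append_singleton, h]
      · have hn : n ≠ p σ.length := by rintro rfl; exact hw rfl
        simp [pathColoring, onPath_append_singleton, h, hn]
    · refine ⟨node σ true, Or.inl rfl, ?_⟩
      rintro w (rfl | ⟨n, -, rfl⟩) hw
      · exact absurd rfl hw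
      · simp [pathColoring, onPath_append_singleton, h]
  · have h1 : OnPath p [p 0] := by simp [OnPath]
    refine ⟨node [p 0] false, Or.inr ⟨_, by simpa using hp 1, rfl, rfl⟩, ?_⟩
    rintro w ((rfl | rfl) | ⟨σ, -, hlen, rfl⟩) hw
    · simp [pathColoring, h1]
    · simp [pathColoring, h1]
    · have h : ¬ OnPath p σ := by
        intro h
        have h' : σ = _ := h
        rw [hlen] at h'
        exact hw (by rw [h']; rfl)
      simp [pathColoring, h1, h]

/-- If a tree `T` has an infinite path, then the hypergraph `H_T` admits a
2-coloring that is both proper and conflict-free. -/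
theorem path_gives_coloring (T : Set (List ℕ))
    (hT : ∀ σ ∈ T, ∀ τ : List ℕ, τ <+: σ → τ ∈ T)
    (p : ℕ → ℕ) (hp : ∀ n : ℕ, (List.ofFn fun i : Fin n => p i) ∈ T) :
    ∃ χ : HTVertex → Fin 2,
      (∀ e ∈ HTEdges T, (∃ v ∈ e, ∃ w ∈ e, v ≠ w) → ∃ v ∈ e, ∃ w ∈ e, χ v ≠ χ w) ∧
      (∀ e ∈ HTEdges T, ∃ v ∈ e, ∀ w ∈ e, w ≠ v → χ w ≠ χ v) := by
  have hcf := pathColoring_conflictFree T p fun n => by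
    have h : (List.range n).map p = List.ofFn fun i : Fin n => p i := by
      apply List.ext_getElem <;> simp
    exact h ▸ hp n
  refine ⟨pathColoring p, ?_, hcf⟩
  rintro e he ⟨x, hx, y, hy, hxy⟩
  obtain ⟨v, hv, hu⟩ := hcf e he
  by_cases h : x = v
  · exact ⟨y, hy, v, hv, hu y hy (h ▸ hxy.symm)⟩
  · exact ⟨x, hx, v, hv, hu x hx h⟩
end

section
/- Let f : ℕ → ℕ be an injection and let H_f be the associated hypergraph. Then every finite partial subhypergraph of H_f has a proper 2-coloring: for every finite set G of vertices of H_f there exists χ : G → Fin 2 such that for every edge e of H_f with |e ∩ G| ≥ 2, χ is non-constant on e ∩ G. -/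
/-!
Colour each `b n` by the parity of `n`, so that the edges `q_n` are properly coloured. Each row
`v m 0, v m 1, …` is coloured alternately, which takes care of the edges `p_{m,i}`, and its phase
is chosen according to `G`. If `m = f n` for some `n` with `b (2 * n) ∈ G`, then `v m j` gets the
parity of `j + 1`: the edge `r_n` is then proper, and `s_m` consists of `b (2 * n)` with colour `0`
and of `v m 0` and `b (2 * m + 1)` with colour `1`. Otherwise `v m j` gets the parity of `j`: the
trace of `r_n` on `G` has at most one vertex whenever `f n = m`, and that of `s_m` is contained in
`{v m 0, b (2 * m + 1)}`, whose two vertices have different colours. Injectivity of `f` ensures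
that `s_m` contains at most one vertex `b (2 * i)`. Finiteness of `G` plays no role.
-/


/-- The vertices of the hypergraph `H_f`: vertices `b i` and `v i j`. -/
inductive HfVertex where
  | b : ℕ → HfVertex
  | v : ℕ → ℕ → HfVertex

/-- The edges of the hypergraph `H_f` associated to an injection `f`:
`p_{n,i} = {v_{n,i}, v_{n,i+1}}`, `q_n = {b_n, b_{n+1}}`,
`r_n = {b_{2n}, v_{f(n),2n}}`, and
`s_n = {v_{n,0}, b_{2n+1}} ∪ {b_{2i} : f i = n}`. -/
def HfEdges (f : ℕ → ℕ) : Set (Set HfVertex) :=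
  {e | ∃ n i : ℕ, e = ({HfVertex.v n i, HfVertex.v n (i + 1)} : Set HfVertex)} ∪
  {e | ∃ n : ℕ, e = ({HfVertex.b n, HfVertex.b (n + 1)} : Set HfVertex)} ∪
  {e | ∃ n : ℕ, e = ({HfVertex.b (2 * n), HfVertex.v (f n) (2 * n)} : Set HfVertex)} ∪
  {e | ∃ n : ℕ, e = ({HfVertex.v n 0, HfVertex.b (2 * n + 1)} : Set HfVertex) ∪
    {w | ∃ i : ℕ, f i = n ∧ w = HfVertex.b (2 * i)}}

open Classical in
/-- The colouring adapted to `G`: `b n` gets the parity of `n`, and the row `v m 0, v m 1, …`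
alternates, starting with `1` exactly when some `b (2 * n) ∈ G` has `f n = m`. -/
noncomputable def hfColor (f : ℕ → ℕ) (G : Finset HfVertex) : HfVertex → Fin 2
  | HfVertex.b n => Fin.ofNat 2 n
  | HfVertex.v m j =>
      if ∃ n, f n = m ∧ HfVertex.b (2 * n) ∈ G then Fin.ofNat 2 (j + 1) else Fin.ofNat 2 j

theorem fin_two_ofNat_ne {a b : ℕ} (h : a % 2 ≠ b % 2) : Fin.ofNat 2 a ≠ Fin.ofNat 2 b :=
  fun heq => h (congrArg Fin.val heq)

/-- For a two-element edge it suffices that its two vertices get different colours whenever both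
lie in `G`. -/
theorem pair_proper {G : Finset HfVertex} {χ : HfVertex → Fin 2} {a c : HfVertex}
    (hχ : a ∈ G → c ∈ G → χ a ≠ χ c)
    (h : ∃ x ∈ ({a, c} : Set HfVertex) ∩ ↑G, ∃ y ∈ ({a, c} : Set HfVertex) ∩ ↑G, x ≠ y) :
    ∃ x ∈ ({a, c} : Set HfVertex) ∩ ↑G, ∃ y ∈ ({a, c} : Set HfVertex) ∩ ↑G, χ x ≠ χ y := by
  obtain ⟨x, ⟨hx, hxG⟩, y, ⟨hy, hyG⟩, hxy⟩ := h
  refine ⟨x, ⟨hx, hxG⟩, y, ⟨hy, hyG⟩, ?_⟩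
  rcases hx with rfl | rfl <;> rcases hy with rfl | rfl
  · exact absurd rfl hxy
  · exact hχ hxG hyG
  · exact (hχ hyG hxG).symm
  · exact absurd rfl hxy

/-- Every finite partial subhypergraph of `H_f` has a proper 2-coloring. -/
theorem Hf_finite_proper_two_coloring (f : ℕ → ℕ) (hf : Function.Injective f)
    (G : Finset HfVertex) :
    ∃ χ : HfVertex → Fin 2, ∀ e ∈ HfEdges f,
      (∃ x ∈ e ∩ ↑G, ∃ y ∈ e ∩ ↑G, x ≠ y) →
      ∃ x ∈ e ∩ ↑G, ∃ y ∈ e ∩ ↑G, χ x ≠ χ y := by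
  refine ⟨hfColor f G, ?_⟩
  rintro e (((⟨n, i, rfl⟩ | ⟨n, rfl⟩) | ⟨n, rfl⟩) | ⟨m, rfl⟩) h
  · refine pair_proper (fun _ _ => ?_) h
    simp only [hfColor]
    split_ifs <;> exact fin_two_ofNat_ne (by omega)
  · exact pair_proper (fun _ _ => fin_two_ofNat_ne (by omega)) h
  · refine pair_proper (fun hb _ => ?_) h
    simp only [hfColor]
    rw [if_pos ⟨n, rfl, hb⟩]
    exact fin_two_ofNat_ne (by omega)
  · by_cases hm : ∃ n, f n = m ∧ HfVertex.b (2 * n) ∈ G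
    · obtain ⟨n, hn, hb⟩ := hm
      have hbs : HfVertex.b (2 * n) ∈ (({HfVertex.v m 0, HfVertex.b (2 * m + 1)} : Set HfVertex) ∪
          {w | ∃ i : ℕ, f i = m ∧ w = HfVertex.b (2 * i)}) ∩ ↑G := ⟨Or.inr ⟨n, hn, rfl⟩, hb⟩
      -- Some vertex of the trace differs from `b (2 * n)`, and all such vertices have colour `1`.
      obtain ⟨z, hz, hzb⟩ : ∃ z ∈ (({HfVertex.v m 0, HfVertex.b (2 * m + 1)} : Set HfVertex) ∪
          {w | ∃ i : ℕ, f i = m ∧ w = HfVertex.b (2 * i)}) ∩ ↑G, z ≠ HfVertex.b (2 * n) := by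
        obtain ⟨x, hx, y, hy, hxy⟩ := h
        by_cases hxb : x = HfVertex.b (2 * n)
        · exact ⟨y, hy, fun hyb => hxy (hxb.trans hyb.symm)⟩
        · exact ⟨x, hx, hxb⟩
      refine ⟨z, hz, _, hbs, ?_⟩
      rcases hz.1 with (rfl | rfl) | ⟨i, hi, rfl⟩
      · simp only [hfColor]
        rw [if_pos ⟨n, hn, hb⟩]
        exact fin_two_ofNat_ne (by omega)
      · exact fin_two_ofNat_ne (by omega)
      · exact absurd (by rw [hf (hi.trans hn.symm)]) hzb
    · have hne : hfColor f G (HfVertex.v m 0) ≠ hfColor f G (HfVertex.b (2 * m + 1)) := by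
        simp only [hfColor]
        rw [if_neg hm]
        exact fin_two_ofNat_ne (by omega)
      obtain ⟨x, hx, y, hy, hxy⟩ := h
      refine ⟨x, hx, y, hy, ?_⟩
      rcases hx.1 with (rfl | rfl) | ⟨i, hi, rfl⟩
      · rcases hy.1 with (rfl | rfl) | ⟨i, hi, rfl⟩
        · exact absurd rfl hxy
        · exact hne
        · exact absurd ⟨i, hi, hy.2⟩ hm
      · rcases hy.1 with (rfl | rfl) | ⟨i, hi, rfl⟩
        · exact hne.symm
        · exact absurd rfl hxy
        · exact absurd ⟨i, hi, hy.2⟩ hm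
      · exact absurd ⟨i, hi, hx.2⟩ hm
end

section
/- Let f : ℕ → ℕ be an injection and let H_f be the associated hypergraph. Suppose χ is a 2-coloring of the vertices of H_f that is non-constant on every edge of H_f containing more than one vertex, and that χ(b₀) = 0. Then for every n ∈ ℕ: χ(v_{n,0}) = 1 if and only if n is in the range of f. -/
/-- Along a path, a 2-coloring with different colors at consecutive vertices gives every vertex of
even index the color of the first vertex. -/
lemma alternating_even {c : ℕ → Fin 2} (h : ∀ n, c n ≠ c (n + 1)) (k : ℕ) :
    c (2 * k) = c 0 := by
  induction k with
  | zero => rfl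
  | succ k ih =>
    have h1 := h (2 * k)
    have h2 := h (2 * k + 1)
    rw [show 2 * (k + 1) = 2 * k + 1 + 1 by ring]
    omega

/-- A proper 2-coloring of `H_f` with `χ(b₀) = 0` computes the range of `f`:
`χ(v_{n,0}) = 1` iff `n` is in the range of `f`. -/
theorem Hf_proper_coloring_computes_range (f : ℕ → ℕ) (hf : Function.Injective f)
    (χ : HfVertex → Fin 2)
    (hχ : ∀ e ∈ HfEdges f, (∃ v ∈ e, ∃ w ∈ e, v ≠ w) → ∃ v ∈ e, ∃ w ∈ e, χ v ≠ χ w)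
    (h0 : χ (HfVertex.b 0) = 0) :
    ∀ n : ℕ, χ (HfVertex.v n 0) = 1 ↔ ∃ t : ℕ, f t = n := by
  have pair : ∀ x y : HfVertex, x ≠ y → ({x, y} : Set HfVertex) ∈ HfEdges f → χ x ≠ χ y := by
    intro x y hxy he hc
    obtain ⟨a, ha, b, hb, hab⟩ := hχ _ he ⟨x, by simp, y, by simp, hxy⟩
    rcases ha with rfl | rfl <;> rcases hb with rfl | rfl <;> simp_all
  have hb : ∀ n, χ (.b n) ≠ χ (.b (n + 1)) := fun n =>
    pair _ _ (by simp) (Or.inl (Or.inl (Or.inr ⟨n, rfl⟩)))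
  have hv : ∀ n i, χ (.v n i) ≠ χ (.v n (i + 1)) := fun n i =>
    pair _ _ (by simp) (Or.inl (Or.inl (Or.inl ⟨n, i, rfl⟩)))
  have hr : ∀ t, χ (.b (2 * t)) ≠ χ (.v (f t) (2 * t)) := fun t =>
    pair _ _ (by simp) (Or.inl (Or.inr ⟨t, rfl⟩))
  have hbe : ∀ k, χ (.b (2 * k)) = 0 := fun k =>
    (alternating_even (c := fun n => χ (.b n)) hb k).trans h0
  have hve : ∀ n k, χ (.v n (2 * k)) = χ (.v n 0) := fun n =>
    alternating_even (c := fun i => χ (.v n i)) (hv n)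
  intro n
  constructor
  · intro h1
    by_contra hn
    -- `n` is outside the range, so the part `{b_{2i} : f i = n}` of `s_n` is empty.
    have hs : χ (.v n 0) ≠ χ (.b (2 * n + 1)) := by
      refine pair _ _ (by simp) (Or.inr ⟨n, ?_⟩)
      have hempty : {w | ∃ i : ℕ, f i = n ∧ w = HfVertex.b (2 * i)} = ∅ := by
        ext w
        simp only [Set.mem_ofPred_eq, Set.mem_empty_iff_false, iff_false]
        rintro ⟨i, hi, -⟩
        exact hn ⟨i, hi⟩
      rw [hempty, Set.union_empty]
    have h2 := hb (2 * n)
    have h3 := hbe n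
    omega
  · rintro ⟨t, rfl⟩
    have h1 := hr t
    rw [hbe, hve] at h1
    omega
end

section
/- Let f, g : ℕ → ℕ be injections with disjoint ranges and let H_{f,g} be the associated hypergraph. Then every finite partial hypergraph of H_{f,g} has a strong 3-coloring: for every finite set V₀ of vertices of H_{f,g} there exists χ : V₀ → Fin 3 that is injective on every edge of H_{f,g} that is contained in V₀. -/
/-- The vertices of the hypergraph `H_{f,g}`: vertices `u i` and `v i`. -/
inductive UVVertex where
  | u : ℕ → UVVertex
  | v : ℕ → UVVertex

/-- The edges of the hypergraph `H_{f,g}`: `{u_i, u_j, v_k}` is an edge iff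
`i < k`, `j < k`, `f t = i` for some `t < k`, and `g t = j` for some `t < k`. -/
def HfgEdges (f g : ℕ → ℕ) : Set (Set UVVertex) :=
  {e | ∃ i j k : ℕ, i < k ∧ j < k ∧ (∃ t < k, f t = i) ∧ (∃ t < k, g t = j) ∧
    e = ({UVVertex.u i, UVVertex.u j, UVVertex.v k} : Set UVVertex)}

/-- Every finite partial hypergraph of `H_{f,g}` has a strong 3-coloring. -/
theorem Hfg_finite_strong_three_coloring (f g : ℕ → ℕ)
    (hf : Function.Injective f) (hg : Function.Injective g)
    (hdisj : ∀ m n : ℕ, f m ≠ g n) (V₀ : Finset UVVertex) :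
    ∃ χ : UVVertex → Fin 3, ∀ e ∈ HfgEdges f g, e ⊆ ↑V₀ → Set.InjOn χ e := by
  classical
  -- Colour the `u i` by membership of `i` in the range of `f`, and all `v k` by the third colour.
  -- Disjointness of the ranges makes this proper on all of `H_{f,g}`, not only on `V₀`.
  refine ⟨fun x => match x with
    | .u i => if i ∈ Set.range f then 0 else 1
    | .v _ => 2, ?_⟩
  rintro e ⟨i, j, k, -, -, ⟨s, -, rfl⟩, ⟨t, -, rfl⟩, rfl⟩ -
  have hg' : g t ∉ Set.range f := fun ⟨m, hm⟩ => hdisj m t hm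
  rintro x (rfl | rfl | rfl) y (rfl | rfl | rfl) hxy <;> simp_all
end
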